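/- With Z^n defined as above, for all n ≥ 2 one has |Z^n| = 2^n (1/2 + 2^{-⌈n/2⌉}); equivalently, the probability over uniform x that S^{n-1}_λ(x_{≥1}) = 0 equals 1/2 + 2^{-⌈n/2⌉}. -/

import Mathlib

def AS (m : ℕ) (lam z : Fin m → ZMod 2) : ZMod 2 :=
  (∑ i : Fin m, ∑ j : Fin m, if i < j then z i * z j else 0) + ∑ i : Fin m, lam i * z i

def lamAlt (m : ℕ) : Fin m → ZMod 2 := fun i => ((i : ℕ) : ZMod 2)

def Zset (m : ℕ) : Finset (Fin (m + 1) → ZMod 2) :=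
  Finset.univ.filter (fun x => AS m (lamAlt m) (fun i => x i.succ) = 0)

/-- The sign character of `ZMod 2`. -/
def chi (a : ZMod 2) : ℚ := if a = 0 then 1 else -1

lemma AS_snoc (m : ℕ) (z : Fin m → ZMod 2) (a : ZMod 2) :
    AS (m + 1) (lamAlt (m + 1)) (Fin.snoc z a : Fin (m + 1) → ZMod 2) =
      AS m (lamAlt m) z + (∑ i, z i) * a + (m : ZMod 2) * a := by
  have h : ∀ i : Fin m, ¬ (Fin.last m < i.castSucc) := fun i => by
    simp [Fin.lt_def, i.2.le]
  simp only [AS, lamAlt, Fin.sum_univ_castSucc, Fin.snoc_castSucc, Fin.snoc_last,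
    Fin.castSucc_lt_castSucc_iff, Fin.castSucc_lt_last, h, if_true, if_false, lt_irrefl,
    Finset.sum_add_distrib, Finset.sum_const_zero, Fin.val_castSucc, Fin.val_last,
    Finset.sum_mul]
  ring

lemma sum_snoc (m : ℕ) (f : (Fin (m + 1) → ZMod 2) → ℚ) :
    ∑ x, f x = ∑ z : Fin m → ZMod 2, ∑ a : ZMod 2, f (Fin.snoc z a : Fin (m + 1) → ZMod 2) := by
  rw [← (Fin.snocEquiv (fun _ : Fin (m + 1) => ZMod 2)).sum_comp, Fintype.sum_prod_type_right]
  rfl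

lemma sum_cons (m : ℕ) (f : (Fin m → ZMod 2) → ℚ) :
    ∑ x : Fin (m + 1) → ZMod 2, f (fun i => x i.succ) = 2 * ∑ z : Fin m → ZMod 2, f z := by
  rw [← (Fin.consEquiv (fun _ : Fin (m + 1) => ZMod 2)).sum_comp, Fintype.sum_prod_type]
  simp [Fin.consEquiv, ZMod.card]

lemma chi_sum (A s k : ZMod 2) :
    ∑ a : ZMod 2, ∑ b : ZMod 2, chi (A + s * a + k * a + (s + a) * b + (k + 1) * b)
      = 2 * chi A := by
  have h2 : ∀ f : ZMod 2 → ℚ, ∑ a, f a = f 0 + f 1 := fun f => Fin.sum_univ_two f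
  simp only [h2]
  have h : ∀ A : ZMod 2, A = 0 ∨ A = 1 := by decide
  have e : (1 : ZMod 2) + 1 = 0 := by decide
  rcases h A with rfl | rfl <;> rcases h s with rfl | rfl <;> rcases h k with rfl | rfl <;>
    simp [chi, e] <;> norm_num

lemma bias_step (m : ℕ) :
    ∑ z : Fin (m + 2) → ZMod 2, chi (AS (m + 2) (lamAlt (m + 2)) z) =
      2 * ∑ z : Fin m → ZMod 2, chi (AS m (lamAlt m) z) := by
  rw [sum_snoc, sum_snoc, Finset.mul_sum]
  refine Finset.sum_congr rfl fun z _ => ?_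
  rw [← chi_sum _ (∑ i, z i) (m : ZMod 2)]
  simp only [AS_snoc, Fin.sum_univ_castSucc, Fin.snoc_castSucc, Fin.snoc_last, Nat.cast_add,
    Nat.cast_one]

lemma bias : ∀ m : ℕ, ∑ z : Fin m → ZMod 2, chi (AS m (lamAlt m) z) = 2 ^ ((m + 1) / 2)
  | 0 => by simp [AS, chi]
  | 1 => by simp [AS, chi, lamAlt, ZMod.card]
  | m + 2 => by
    rw [bias_step, bias m, show (m + 2 + 1) / 2 = (m + 1) / 2 + 1 by omega]
    ring

/-- |Z^n| = 2^n (1/2 + 2^{-⌈n/2⌉}) for n = m + 1 ≥ 2, where ⌈n/2⌉ = (m+2)/2 in ℕ. -/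
theorem stmt6 (m : ℕ) (hm : 1 ≤ m) :
    ((Zset m).card : ℚ) = 2 ^ (m + 1) * (1 / 2 + (1 / 2 : ℚ) ^ ((m + 2) / 2)) := by
  have h1 : ((Zset m).card : ℚ) = ∑ x : Fin (m + 1) → ZMod 2,
      (fun z => (1 + chi (AS m (lamAlt m) z)) / 2) (fun i => x i.succ) := by
    rw [Zset, Finset.card_filter, Nat.cast_sum]
    refine Finset.sum_congr rfl fun x _ => ?_
    by_cases h : AS m (lamAlt m) (fun i => x i.succ) = 0 <;> simp [chi, h]
  rw [h1, sum_cons m (fun z => (1 + chi (AS m (lamAlt m) z)) / 2), ← Finset.sum_div, Finset.sum_add_distrib, bias]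
  have h3 : (2 : ℚ) ^ (m + 1) * (1 / 2 : ℚ) ^ ((m + 2) / 2) = 2 ^ ((m + 1) / 2) := by
    have : m + 1 = (m + 1) / 2 + (m + 2) / 2 := by omega
    conv_lhs => rw [this]
    rw [pow_add, mul_assoc, ← mul_pow]
    norm_num
  rw [mul_add, h3]
  simp [ZMod.card]
  ring
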